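/- Assume c_k ≥ 0 for all k = 1, …, K. Then for every bounded measurable ω-periodic function η₀ : ℝ → ℝ, every t > 0 and every x ∈ ℝ, (S(t)η₀)(x) ≥ (inf_{y∈ℝ} η₀(y)) · e^{−αt} − A (1 − e^{−αt})/α; i.e. the mild solution dominates the spatially constant ODE subsolution ξ(t) = A(e^{−αt} − 1)/α + (inf η₀) e^{−αt}. -/

import Mathlib

open Real MeasureTheory Filter Topology intervalIntegral

/-- One-dimensional Gauss (heat) kernel `G_t(x) = (4πt)^{−1/2} exp(−x²/(4t))`. -/
noncomputable def heatKernel (t x : ℝ) : ℝ :=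
  (4 * Real.pi * t) ^ (-(1 : ℝ) / 2) * Real.exp (-x ^ 2 / (4 * t))

/-- The `ω`-periodized heat kernel `Ĝ_t(x) = Σ_{j ∈ ℤ} G_t(x − jω)`. -/
noncomputable def perHeatKernel (ω t x : ℝ) : ℝ :=
  ∑' j : ℤ, heatKernel t (x - (j : ℝ) * ω)

/-- Mild solution of `η_t = σ η_xx − α η + Σ_{k} c_k δ(x − a_k) − A` with initial data `η₀`:
`(S(t)η₀)(x) = e^{−αt} ∫ G_{σt}(x − y) η₀(y) dy
  + Σ_k c_k ∫₀^t e^{−ατ} Ĝ_{στ}(x − a_k) dτ − A(1 − e^{−αt})/α` for `t > 0`,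
and `S(0)η₀ = η₀`. -/
noncomputable def mildSol (ω σ α A : ℝ) {K : ℕ} (a c : Fin K → ℝ)
    (η₀ : ℝ → ℝ) (t x : ℝ) : ℝ :=
  if t = 0 then η₀ x else
    Real.exp (-(α * t)) * (∫ y : ℝ, heatKernel (σ * t) (x - y) * η₀ y)
      + (∑ k : Fin K, c k * ∫ τ in (0:ℝ)..t,
          Real.exp (-(α * τ)) * perHeatKernel ω (σ * τ) (x - a k))
      - A * (1 - Real.exp (-(α * t))) / α

/-- Rupture time for the threshold `η_c`:
`t_r(η₀) = sup{ t ≥ 0 : inf_x (S(t)η₀)(x) > η_c }`. -/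
noncomputable def ruptureTime (ω σ α A : ℝ) {K : ℕ} (a c : Fin K → ℝ)
    (ηc : ℝ) (η₀ : ℝ → ℝ) : ℝ :=
  sSup {t : ℝ | 0 ≤ t ∧ ηc < ⨅ x : ℝ, mildSol ω σ α A a c η₀ t x}

open ProbabilityTheory

/-!
The heat kernel at time `t` is the centred Gaussian density of variance `2t`, so it is nonnegative
with unit mass and averaging against it preserves the lower bounds of the initial data. The point
sources contribute time integrals of a nonnegative kernel, weighted by the `c_k ≥ 0`, so discarding
them leaves a lower bound; what remains after damping is the solution of the spatially constant ODE.
-/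

theorem heatKernel_eq_gaussianPDFReal {t : ℝ} (ht : 0 ≤ t) :
    heatKernel t = gaussianPDFReal 0 (2 * t).toNNReal := by
  funext x
  rw [heatKernel, gaussianPDFReal, Real.coe_toNNReal _ (by positivity), neg_div,
    rpow_neg (by positivity), ← sqrt_eq_rpow]
  ring_nf

theorem heatKernel_nonneg {t : ℝ} (ht : 0 ≤ t) (x : ℝ) : 0 ≤ heatKernel t x :=
  heatKernel_eq_gaussianPDFReal ht ▸ gaussianPDFReal_nonneg _ _ x

theorem integrable_heatKernel {t : ℝ} (ht : 0 ≤ t) : Integrable (heatKernel t) :=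
  heatKernel_eq_gaussianPDFReal ht ▸ integrable_gaussianPDFReal _ _

theorem integral_heatKernel {t : ℝ} (ht : 0 < t) : ∫ x, heatKernel t x = 1 := by
  rw [heatKernel_eq_gaussianPDFReal ht.le]
  exact integral_gaussianPDFReal_eq_one 0 (Real.toNNReal_pos.2 (by positivity)).ne'

theorem integrable_heatKernel_sub_mul {t M : ℝ} (ht : 0 ≤ t) {f : ℝ → ℝ}
    (hf : AEStronglyMeasurable f) (hM : ∀ᵐ y, ‖f y‖ ≤ M) (x : ℝ) :
    Integrable fun y => heatKernel t (x - y) * f y :=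
  ((integrable_heatKernel ht).comp_sub_left x).mul_bdd hf hM

theorem le_integral_heatKernel_sub_mul {t m x : ℝ} (ht : 0 < t) {f : ℝ → ℝ}
    (hf : Integrable fun y => heatKernel t (x - y) * f y) (hm : ∀ᵐ y, m ≤ f y) :
    m ≤ ∫ y, heatKernel t (x - y) * f y :=
  calc
    m = ∫ y, heatKernel t (x - y) * m := by
      rw [MeasureTheory.integral_mul_const, integral_sub_left_eq_self (heatKernel t) volume x,
        integral_heatKernel ht, one_mul]
    _ ≤ ∫ y, heatKernel t (x - y) * f y := by
      refine integral_mono_ae (((integrable_heatKernel ht.le).comp_sub_left x).mul_const m) hf ?_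
      filter_upwards [hm] with y hy
      exact mul_le_mul_of_nonneg_left hy (heatKernel_nonneg ht.le _)

theorem perHeatKernel_nonneg (ω : ℝ) {t : ℝ} (ht : 0 ≤ t) (x : ℝ) : 0 ≤ perHeatKernel ω t x :=
  tsum_nonneg fun _ => heatKernel_nonneg ht _

theorem integral_exp_mul_perHeatKernel_nonneg (ω α : ℝ) {σ t : ℝ} (hσ : 0 ≤ σ) (ht : 0 ≤ t)
    (x : ℝ) : 0 ≤ ∫ τ in (0 : ℝ)..t, exp (-(α * τ)) * perHeatKernel ω (σ * τ) x :=
  intervalIntegral.integral_nonneg ht fun _ hτ =>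
    mul_nonneg (exp_nonneg _) (perHeatKernel_nonneg ω (mul_nonneg hσ hτ.1) x)

theorem mildSol_ge_ode_subsolution_general {ω σ α : ℝ} (A : ℝ) {K : ℕ} (a : Fin K → ℝ)
    {c : Fin K → ℝ} (_hω : ω ≠ 0) (hσ : 0 < σ) (_hα : α ≠ 0) (hc : ∀ k, 0 ≤ c k)
    {η₀ : ℝ → ℝ} {m t x : ℝ} (ht : 0 < t)
    (hint : Integrable fun y => heatKernel (σ * t) (x - y) * η₀ y) (hm : ∀ᵐ y, m ≤ η₀ y) :
    m * exp (-(α * t)) - A * (1 - exp (-(α * t))) / α ≤ mildSol ω σ α A a c η₀ t x := by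
  have hdata : m * exp (-(α * t)) ≤
      exp (-(α * t)) * ∫ y, heatKernel (σ * t) (x - y) * η₀ y := by
    rw [mul_comm]
    gcongr
    exact le_integral_heatKernel_sub_mul (mul_pos hσ ht) hint hm
  have hsource : 0 ≤ ∑ k, c k * ∫ τ in (0 : ℝ)..t,
      exp (-(α * τ)) * perHeatKernel ω (σ * τ) (x - a k) :=
    Finset.sum_nonneg fun k _ =>
      mul_nonneg (hc k) (integral_exp_mul_perHeatKernel_nonneg ω α hσ.le ht.le _)
  rw [mildSol, if_neg ht.ne']
  linarith

/-- If `c_k ≥ 0` for all `k`, the mild solution dominates the spatially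
constant ODE subsolution: `(S(t)η₀)(x) ≥ (inf η₀) e^{−αt} − A(1 − e^{−αt})/α`. -/
theorem mildSol_ge_ode_subsolution (ω σ α A : ℝ) (K : ℕ) (a c : Fin K → ℝ)
    (hω : 0 < ω) (hσ : 0 < σ) (hα : 0 < α)
    (ha0 : ∀ k, 0 ≤ a k) (haω : ∀ k, a k < ω) (hamono : StrictMono a)
    (hc : ∀ k, 0 ≤ c k) :
    ∀ η₀ : ℝ → ℝ, Measurable η₀ → (∃ M, ∀ x, |η₀ x| ≤ M) →
      (∀ x, η₀ (x + ω) = η₀ x) →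
      ∀ t : ℝ, 0 < t → ∀ x : ℝ,
        (⨅ y : ℝ, η₀ y) * Real.exp (-(α * t))
            - A * (1 - Real.exp (-(α * t))) / α ≤
          mildSol ω σ α A a c η₀ t x := by
  rintro η₀ hη ⟨M, hM⟩ - t ht x
  have hbdd : BddBelow (Set.range η₀) :=
    ⟨-M, Set.forall_mem_range.2 fun y => neg_le_of_abs_le (hM y)⟩
  exact mildSol_ge_ode_subsolution_general A a hω.ne' hσ hα.ne' hc ht
    (integrable_heatKernel_sub_mul (mul_pos hσ ht).le hη.aestronglyMeasurable (ae_of_all _ hM) x)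
    (ae_of_all _ (ciInf_le hbdd))
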